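/- Let Ξ be a nonempty set, (E, Δ) a metric space, T > 0, and X = (X_t)_{t∈[0,T]} a family of functions X_t: Ξ → E. For n ∈ ℕ let S_n = {T j 2^{−n} : j = 0, …, 2^n}, and for t ∈ [0,T] let t_n^− = max{s ∈ S_n : s ≤ t} and t_n^+ = min{s ∈ S_n : s > t} (for t ∈ S_{n+1}∖S_n one has t_n^−, t_n^+ ∈ S_n). Define g_n: Ξ × S_{n+1} → S_n by: g_n(ω, t) = t if t ∈ S_n; for t ∈ S_{n+1}∖S_n, g_n(ω, t) = t_n^− if Δ(X_t(ω), X_{t_n^−}(ω)) ≤ Δ(X_t(ω), X_{t_n^+}(ω)), and g_n(ω, t) = t_n^+ otherwise. For integers n ≥ m let f_{m,n}(ω, ·) = g_m(ω, ·) ∘ ⋯ ∘ g_n(ω, ·): S_{n+1} → S_m. Then: (i) for every ω and n, g_n(ω, ·) is non-decreasing on S_{n+1} and is the identity on S_n, and consequently f_{m,n}(ω, ·) is non-decreasing on S_{n+1}; (ii) there exists a family of functions f_n: Ξ × [0,T] → S_n, n ∈ ℕ, such that for each ω the map f_n(ω, ·) is a non-decreasing, right-continuous step function, and such that f_{m,n}(ω,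 f_{n+1}(ω, t)) = f_m(ω, t) for all n ≥ m, t ∈ [0,T], ω ∈ Ξ, and |t − f_n(ω, t)| ≤ T 2^{−n} for all ω ∈ Ξ, t ∈ [0,T], n ∈ ℕ. -/

import Mathlib

open Filter Set Topology

noncomputable section

/-- The dyadic grid `S_n = {T j 2^{−n} : j = 0, …, 2^n}`. -/
def dyadic (T : ℝ) (n : ℕ) : Set ℝ := {s | ∃ j : ℕ, j ≤ 2 ^ n ∧ s = T * j / 2 ^ n}

/-- `t_n^− = max {s ∈ S_n : s ≤ t}`. -/
noncomputable def dyadFloor (T : ℝ) (n : ℕ) (t : ℝ) : ℝ :=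
  sSup {s | s ∈ dyadic T n ∧ s ≤ t}

/-- `t_n^+ = min {s ∈ S_n : s > t}`. -/
noncomputable def dyadCeil (T : ℝ) (n : ℕ) (t : ℝ) : ℝ :=
  sInf {s | s ∈ dyadic T n ∧ t < s}

open Classical in
/-- The map `g_n : Ξ × S_{n+1} → S_n`: the identity on `S_n`, and on `S_{n+1}∖S_n`
it picks the neighbouring dyadic point of level `n` closer to `X_t` (preferring
`t_n^−` in case of a tie). -/
noncomputable def gFun {Ξ E : Type*} [MetricSpace E] (T : ℝ) (X : ℝ → Ξ → E)
    (n : ℕ) (ω : Ξ) (t : ℝ) : ℝ :=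
  if t ∈ dyadic T n then t
  else if dist (X t ω) (X (dyadFloor T n t) ω) ≤ dist (X t ω) (X (dyadCeil T n t) ω)
    then dyadFloor T n t else dyadCeil T n t

/-- Auxiliary recursion: `fComp m k = g_m ∘ ⋯ ∘ g_{m+k}`. -/
noncomputable def fComp {Ξ E : Type*} [MetricSpace E] (T : ℝ) (X : ℝ → Ξ → E)
    (m : ℕ) : ℕ → Ξ → ℝ → ℝ
  | 0, ω, t => gFun T X m ω t
  | k + 1, ω, t => fComp T X m k ω (gFun T X (m + k + 1) ω t)

/-- `f_{m,n} = g_m ∘ ⋯ ∘ g_n` (for `n ≥ m`). -/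
noncomputable def fmn {Ξ E : Type*} [MetricSpace E] (T : ℝ) (X : ℝ → Ξ → E)
    (m n : ℕ) (ω : Ξ) (t : ℝ) : ℝ :=
  fComp T X m (n - m) ω t

/-! The points of `S_n` are fixed by `g_n`, and two points of `S_{n+1}` are always separated by a
point of `S_n`, which `g_n` can cross from neither side: hence `g_n` is monotone. On dyadic points
the compositions `f_{m,n}` stabilise as `n → ∞`, and their limit is a monotone function with values
in the finite set `S_m`. Its infimum over the dyadic points to the right of `t` is attained on a
whole right neighbourhood of `t`, so this infimum is right-continuous in `t` and inherits the
compatibility relations from the dyadic points. -/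

section RightLimit

variable {α β γ : Type*} [LinearOrder α] [ConditionallyCompleteLinearOrder β]
  [ConditionallyCompleteLinearOrder γ] {D : Set α} {T s t u : α} {h : α → β}

/-- The points of `D` strictly to the right of `t`, together with an end point `T`, which keeps the
set nonempty when `t` is the last point of the interval under consideration. -/
def rightPoints (D : Set α) (T t : α) : Set α := insert T (D ∩ Ioi t)

/-- The right limit along `D` of a function `h` given on `D`, encoded as the infimum of `h` over the
points of `D` to the right. It is meant for monotone `h` with finitely many values and for `D` with
last point `T`, where its value is `h T`. -/
def rightLimWithin (D : Set α) (T : α) (h : α → β) (t : α) : β := sInf (h '' rightPoints D T t)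

lemma rightPoints_subset (hT : T ∈ D) : rightPoints D T t ⊆ D :=
  insert_subset hT inter_subset_left

lemma antitone_rightPoints (D : Set α) (T : α) : Antitone (rightPoints D T) := fun _ _ htu =>
  insert_subset_insert (inter_subset_inter_right D (Ioi_subset_Ioi htu))

lemma le_of_mem_rightPoints (htT : t ≤ T) (hs : s ∈ rightPoints D T t) : t ≤ s := by
  obtain rfl | ⟨-, hts⟩ := hs
  exacts [htT, le_of_lt hts]

lemma exists_eq_rightLimWithin (hT : T ∈ D) (hfin : (h '' D).Finite) (t : α) :
    ∃ s ∈ rightPoints D T t, h s = rightLimWithin D T h t :=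
  ((insert_nonempty T _).image h).csInf_mem (hfin.subset (image_mono (rightPoints_subset hT)))

lemma rightLimWithin_le (hT : T ∈ D) (hfin : (h '' D).Finite) (hs : s ∈ rightPoints D T t) :
    rightLimWithin D T h t ≤ h s :=
  csInf_le (hfin.subset (image_mono (rightPoints_subset hT))).bddBelow (mem_image_of_mem h hs)

lemma monotone_rightLimWithin (hT : T ∈ D) (hfin : (h '' D).Finite) :
    Monotone (rightLimWithin D T h) := by
  intro t u htu
  obtain ⟨s, hs, hsu⟩ := exists_eq_rightLimWithin hT hfin u
  exact hsu ▸ rightLimWithin_le hT hfin (antitone_rightPoints D T htu hs)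

lemma eventually_rightLimWithin_eq [TopologicalSpace α] [OrderClosedTopology α] (hT : T ∈ D)
    (hfin : (h '' D).Finite) (htT : t < T) :
    ∀ᶠ u in 𝓝[>] t, rightLimWithin D T h u = rightLimWithin D T h t := by
  obtain ⟨s, hs, hst⟩ := exists_eq_rightLimWithin hT hfin t
  have hts : t < s := by
    obtain rfl | ⟨-, hts⟩ := hs
    exacts [htT, hts]
  filter_upwards [Ioo_mem_nhdsGT hts] with u hu
  have hsu : s ∈ rightPoints D T u := hs.imp_right fun hs => ⟨hs.1, hu.2⟩
  exact le_antisymm (hst ▸ rightLimWithin_le hT hfin hsu)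
    (monotone_rightLimWithin hT hfin hu.1.le)

lemma eq_rightLimWithin_of_le (hT : T ∈ D) (hfin : (h '' D).Finite) (hmono : MonotoneOn h D)
    (hs : s ∈ rightPoints D T t) (hst : h s = rightLimWithin D T h t)
    (hu : u ∈ rightPoints D T t) (hus : u ≤ s) : h u = rightLimWithin D T h t :=
  le_antisymm (hst ▸ hmono (rightPoints_subset hT hu) (rightPoints_subset hT hs) hus)
    (rightLimWithin_le hT hfin hu)

lemma map_rightLimWithin {k : α → γ} {φ : β → γ} (hT : T ∈ D) (hfin : (h '' D).Finite)
    (hmono : MonotoneOn h D) (kfin : (k '' D).Finite) (kmono : MonotoneOn k D)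
    (hφ : ∀ s ∈ D, φ (h s) = k s) (t : α) :
    φ (rightLimWithin D T h t) = rightLimWithin D T k t := by
  obtain ⟨s, hs, hst⟩ := exists_eq_rightLimWithin hT hfin t
  obtain ⟨u, hu, hut⟩ := exists_eq_rightLimWithin hT kfin t
  have hmin : min s u ∈ rightPoints D T t := by
    obtain h | h := min_choice s u <;> rwa [h]
  rw [← eq_rightLimWithin_of_le hT hfin hmono hs hst hmin (min_le_left s u),
    ← eq_rightLimWithin_of_le hT kfin kmono hu hut hmin (min_le_right s u),
    hφ _ (rightPoints_subset hT hmin)]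

end RightLimit

/-- `descend g m k = g_m ∘ ⋯ ∘ g_{m+k-1}`, a composition of `k` maps, so that
`f_{m,n} = descend g m (n + 1 - m)`. -/
def descend {α : Type*} (g : ℕ → α → α) (m : ℕ) : ℕ → α → α
  | 0 => id
  | k + 1 => descend g m k ∘ g (m + k)

lemma descend_add {α : Type*} (g : ℕ → α → α) (m k l : ℕ) :
    descend g m (k + l) = descend g m k ∘ descend g (m + k) l := by
  induction l with
  | zero => rfl
  | succ l ih =>
    change descend g m (k + l) ∘ g (m + (k + l)) =
      descend g m k ∘ descend g (m + k) l ∘ g (m + k + l)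
    rw [ih, add_assoc, Function.comp_assoc]

/-- An increasing sequence of sets `D n` with monotone retractions `g n` of `D (n + 1)` onto `D n`.
Only the values of `g n` on `D (n + 1)` matter. -/
structure IsRetractionTower {α : Type*} [Preorder α] (D : ℕ → Set α) (g : ℕ → α → α) : Prop where
  monotone : Monotone D
  mapsTo : ∀ n, MapsTo (g n) (D (n + 1)) (D n)
  monotoneOn : ∀ n, MonotoneOn (g n) (D (n + 1))
  eqOn_id : ∀ n, EqOn (g n) id (D n)

/-- The eventual value of `descend g m k s` as `k → ∞`, for `s` in the union of the `D n`. Composing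
as many maps as the first `n` with `s ∈ D n` already reaches it. -/
def descendLim {α : Type*} (D : ℕ → Set α) (g : ℕ → α → α) (m : ℕ) (s : α) : α :=
  descend g m (sInf {n | s ∈ D n}) s

/-- The right-continuous map `f_m` into `D m` built from `descendLim D g m`, for points up to the
last point `T` of the tower. -/
def towerRightLim {α : Type*} [ConditionallyCompleteLinearOrder α] (D : ℕ → Set α)
    (g : ℕ → α → α) (T : α) (m : ℕ) : α → α :=
  rightLimWithin (⋃ n, D n) T (descendLim D g m)

namespace IsRetractionTower

section Preorder

variable {α : Type*} [Preorder α] {D : ℕ → Set α} {g : ℕ → α → α} {s : α}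

lemma mapsTo_descend (hg : IsRetractionTower D g) (m k : ℕ) :
    MapsTo (descend g m k) (D (m + k)) (D m) := by
  induction k with
  | zero => exact mapsTo_id _
  | succ k ih => exact ih.comp (hg.mapsTo (m + k))

lemma monotoneOn_descend (hg : IsRetractionTower D g) (m k : ℕ) :
    MonotoneOn (descend g m k) (D (m + k)) := by
  induction k with
  | zero => exact monotoneOn_id
  | succ k ih => exact ih.comp (hg.monotoneOn (m + k)) (hg.mapsTo (m + k))

lemma eqOn_descend_id (hg : IsRetractionTower D g) (m k : ℕ) :
    EqOn (descend g m k) id (D m) := by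
  induction k with
  | zero => exact eqOn_refl id _
  | succ k ih =>
    intro s hs
    have hgs : g (m + k) s = s := hg.eqOn_id (m + k) (hg.monotone (Nat.le_add_right m k) hs)
    rw [descend, Function.comp_apply, hgs, ih hs]

lemma descend_eq_of_le (hg : IsRetractionTower D g) {m k l : ℕ} (hs : s ∈ D (m + k))
    (hkl : k ≤ l) : descend g m l s = descend g m k s := by
  obtain ⟨j, rfl⟩ := Nat.exists_eq_add_of_le hkl
  rw [descend_add, Function.comp_apply, hg.eqOn_descend_id (m + k) j hs, id]

lemma descendLim_eq_descend (hg : IsRetractionTower D g) {m k : ℕ} (hs : s ∈ D (m + k)) :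
    descendLim D g m s = descend g m k s := by
  have hlevel : s ∈ D (sInf {n | s ∈ D n}) := Nat.sInf_mem (s := {n | s ∈ D n}) ⟨_, hs⟩
  rw [descendLim, ← hg.descend_eq_of_le (hg.monotone (Nat.le_add_left _ m) hlevel)
    (le_max_left _ k), hg.descend_eq_of_le hs (le_max_right _ k)]

lemma exists_mem_add (hg : IsRetractionTower D g) (m : ℕ) (hs : s ∈ ⋃ n, D n) :
    ∃ k, s ∈ D (m + k) := by
  obtain ⟨k, hk⟩ := mem_iUnion.1 hs
  exact ⟨k, hg.monotone (Nat.le_add_left k m) hk⟩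

lemma mapsTo_descendLim (hg : IsRetractionTower D g) (m : ℕ) :
    MapsTo (descendLim D g m) (⋃ n, D n) (D m) := by
  intro s hs
  obtain ⟨k, hk⟩ := hg.exists_mem_add m hs
  exact hg.descendLim_eq_descend hk ▸ hg.mapsTo_descend m k hk

lemma eqOn_descendLim_id (hg : IsRetractionTower D g) (m : ℕ) :
    EqOn (descendLim D g m) id (D m) :=
  fun _ hs => hg.descendLim_eq_descend (k := 0) hs

lemma monotoneOn_descendLim (hg : IsRetractionTower D g) (m : ℕ) :
    MonotoneOn (descendLim D g m) (⋃ n, D n) := by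
  intro s hs t ht hst
  obtain ⟨k, hk⟩ := hg.exists_mem_add m hs
  obtain ⟨l, hl⟩ := hg.exists_mem_add m ht
  have hs' : s ∈ D (m + max k l) := hg.monotone (by gcongr; exact le_max_left k l) hk
  have ht' : t ∈ D (m + max k l) := hg.monotone (by gcongr; exact le_max_right k l) hl
  rw [hg.descendLim_eq_descend hs', hg.descendLim_eq_descend ht']
  exact hg.monotoneOn_descend m _ hs' ht' hst

lemma descend_descendLim (hg : IsRetractionTower D g) (m k : ℕ) (hs : s ∈ ⋃ n, D n) :
    descend g m k (descendLim D g (m + k) s) = descendLim D g m s := by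
  obtain ⟨l, hl⟩ := hg.exists_mem_add (m + k) hs
  rw [hg.descendLim_eq_descend hl, hg.descendLim_eq_descend (k := k + l) (by rwa [← add_assoc]),
    descend_add, Function.comp_apply]

lemma finite_image_descendLim (hg : IsRetractionTower D g) {m : ℕ} (hfin : (D m).Finite) :
    (descendLim D g m '' ⋃ n, D n).Finite :=
  hfin.subset (hg.mapsTo_descendLim m).image_subset

end Preorder

section RightLimit

variable {α : Type*} [ConditionallyCompleteLinearOrder α] {D : ℕ → Set α} {g : ℕ → α → α}
  {T a t : α} {m : ℕ}

lemma towerRightLim_mem (hg : IsRetractionTower D g) (hT : T ∈ ⋃ n, D n)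
    (hfin : (D m).Finite) (t : α) : towerRightLim D g T m t ∈ D m := by
  obtain ⟨s, hs, hst⟩ := exists_eq_rightLimWithin hT (hg.finite_image_descendLim hfin) t
  rw [towerRightLim, ← hst]
  exact hg.mapsTo_descendLim m (rightPoints_subset hT hs)

lemma monotone_towerRightLim (hg : IsRetractionTower D g) (hT : T ∈ ⋃ n, D n)
    (hfin : (D m).Finite) : Monotone (towerRightLim D g T m) :=
  monotone_rightLimWithin hT (hg.finite_image_descendLim hfin)

lemma continuousWithinAt_towerRightLim [TopologicalSpace α] [OrderClosedTopology α]
    (hg : IsRetractionTower D g) (hT : T ∈ ⋃ n, D n) (hfin : (D m).Finite) (htT : t < T) :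
    ContinuousWithinAt (towerRightLim D g T m) (Ioi t) t :=
  tendsto_nhds_of_eventually_eq
    (eventually_rightLimWithin_eq hT (hg.finite_image_descendLim hfin) htT)

lemma descend_towerRightLim (hg : IsRetractionTower D g) (hT : T ∈ ⋃ n, D n) {k : ℕ}
    (hfin : (D m).Finite) (hfin' : (D (m + k)).Finite) (t : α) :
    descend g m k (towerRightLim D g T (m + k) t) = towerRightLim D g T m t :=
  map_rightLimWithin hT (hg.finite_image_descendLim hfin') (hg.monotoneOn_descendLim (m + k))
    (hg.finite_image_descendLim hfin) (hg.monotoneOn_descendLim m)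
    (fun _ hs => hg.descend_descendLim m k hs) t

lemma le_towerRightLim (hg : IsRetractionTower D g) (hT : T ∈ ⋃ n, D n) (hfin : (D m).Finite)
    (ha : a ∈ D m) (hat : a ≤ t) (htT : t ≤ T) : a ≤ towerRightLim D g T m t := by
  obtain ⟨s, hs, hst⟩ := exists_eq_rightLimWithin hT (hg.finite_image_descendLim hfin) t
  calc a = descendLim D g m a := (hg.eqOn_descendLim_id m ha).symm
    _ ≤ descendLim D g m s := hg.monotoneOn_descendLim m (mem_iUnion_of_mem m ha)
        (rightPoints_subset hT hs) (hat.trans (le_of_mem_rightPoints htT hs))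
    _ = towerRightLim D g T m t := hst

lemma towerRightLim_le (hg : IsRetractionTower D g) (hT : T ∈ ⋃ n, D n) (hfin : (D m).Finite)
    (ha : a ∈ D m) (hta : a ∈ rightPoints (⋃ n, D n) T t) : towerRightLim D g T m t ≤ a :=
  (rightLimWithin_le hT (hg.finite_image_descendLim hfin) hta).trans_eq
    (hg.eqOn_descendLim_id m ha)

end RightLimit

end IsRetractionTower

section DyadicGrid

variable {T t : ℝ} {n : ℕ}

lemma finite_dyadic (T : ℝ) (n : ℕ) : (dyadic T n).Finite := by
  refine ((finite_Iic (2 ^ n)).image fun j : ℕ => T * j / 2 ^ n).subset ?_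
  rintro _ ⟨j, hj, rfl⟩
  exact mem_image_of_mem _ hj

lemma zero_mem_dyadic (T : ℝ) (n : ℕ) : 0 ∈ dyadic T n := ⟨0, Nat.zero_le _, by simp⟩

lemma right_mem_dyadic (T : ℝ) (n : ℕ) : T ∈ dyadic T n :=
  ⟨2 ^ n, le_rfl, by push_cast; field_simp⟩

lemma mul_two_mul_div_two_pow_succ (T x : ℝ) (n : ℕ) :
    T * (2 * x) / 2 ^ (n + 1) = T * x / 2 ^ n := by
  rw [pow_succ]
  field_simp

lemma monotone_dyadic (T : ℝ) : Monotone (dyadic T) := by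
  refine monotone_nat_of_le_succ fun n => ?_
  rintro _ ⟨j, hj, rfl⟩
  refine ⟨2 * j, by rw [pow_succ]; lia, ?_⟩
  rw [Nat.cast_mul, Nat.cast_two, mul_two_mul_div_two_pow_succ]

lemma dyadic_subset_Icc (hT : 0 ≤ T) (n : ℕ) : dyadic T n ⊆ Icc 0 T := by
  rintro _ ⟨j, hj, rfl⟩
  have hj' : (j : ℝ) ≤ 2 ^ n := mod_cast hj
  refine ⟨by positivity, ?_⟩
  rw [div_le_iff₀ (by positivity)]
  gcongr

lemma exists_mem_dyadic_Icc_of_lt (hT : 0 ≤ T) {s t : ℝ} (hs : s ∈ dyadic T (n + 1))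
    (ht : t ∈ dyadic T (n + 1)) (hst : s < t) : ∃ a ∈ dyadic T n, a ∈ Icc s t := by
  obtain ⟨j, -, rfl⟩ := hs
  obtain ⟨k, hk, rfl⟩ := ht
  have hjk : j < k := by
    contrapose! hst
    gcongr
  -- `i = ⌈j / 2⌉`, so that `2 * i` is the first even index from `j` on
  obtain ⟨i, hji, hik⟩ : ∃ i, j ≤ 2 * i ∧ 2 * i ≤ k := ⟨(j + 1) / 2, by lia, by lia⟩
  have hji' : (j : ℝ) ≤ 2 * i := mod_cast hji
  have hik' : (2 * i : ℝ) ≤ k := mod_cast hik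
  refine ⟨T * i / 2 ^ n, ⟨i, by rw [pow_succ] at hk; lia, rfl⟩, ?_⟩
  rw [← mul_two_mul_div_two_pow_succ T i]
  constructor <;> gcongr

lemma exists_mem_dyadic_le_lt_add (n : ℕ) (ht : t ∈ Ico 0 T) :
    ∃ a ∈ dyadic T n, a + T / 2 ^ n ∈ dyadic T n ∧ a ≤ t ∧ t < a + T / 2 ^ n := by
  have hT : 0 < T := ht.1.trans_lt ht.2
  have hmesh : 0 < T / 2 ^ n := by positivity
  set j := ⌊t / (T / 2 ^ n)⌋₊
  have hjt : j * (T / 2 ^ n) ≤ t :=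
    (le_div_iff₀ hmesh).1 (Nat.floor_le (div_nonneg ht.1 hmesh.le))
  have htj : t < (j + 1) * (T / 2 ^ n) := (div_lt_iff₀ hmesh).1 (Nat.lt_floor_add_one _)
  have hj : j < 2 ^ n := by
    refine (Nat.floor_lt (div_nonneg ht.1 hmesh.le)).2 ((div_lt_iff₀ hmesh).2 ?_)
    push_cast
    rw [mul_div_cancel₀ _ (by positivity)]
    exact ht.2
  refine ⟨j * (T / 2 ^ n), ⟨j, hj.le, by ring⟩, ⟨j + 1, hj, by push_cast; ring⟩, hjt, ?_⟩
  rwa [← add_one_mul]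

lemma isGreatest_dyadFloor (n : ℕ) (ht : 0 ≤ t) :
    IsGreatest {s | s ∈ dyadic T n ∧ s ≤ t} (dyadFloor T n t) := by
  have hfin : {s | s ∈ dyadic T n ∧ s ≤ t}.Finite := (finite_dyadic T n).sep _
  exact ⟨Nonempty.csSup_mem ⟨0, zero_mem_dyadic T n, ht⟩ hfin, fun _ => le_csSup hfin.bddAbove⟩

lemma isLeast_dyadCeil (n : ℕ) (ht : t < T) :
    IsLeast {s | s ∈ dyadic T n ∧ t < s} (dyadCeil T n t) := by
  have hfin : {s | s ∈ dyadic T n ∧ t < s}.Finite := (finite_dyadic T n).sep _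
  exact ⟨Nonempty.csInf_mem ⟨T, right_mem_dyadic T n, ht⟩ hfin, fun _ => csInf_le hfin.bddBelow⟩

end DyadicGrid

section NearestNeighbour

variable {Ξ E : Type*} [MetricSpace E] {T t a : ℝ} {n : ℕ} (X : ℝ → Ξ → E) (ω : Ξ)

lemma gFun_of_mem (ht : t ∈ dyadic T n) : gFun T X n ω t = t := if_pos ht

lemma gFun_of_notMem (ht : t ∉ dyadic T n) :
    gFun T X n ω t = dyadFloor T n t ∨ gFun T X n ω t = dyadCeil T n t := by
  rw [gFun, if_neg ht]
  exact ite_eq_or_eq _ _ _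

lemma lt_right_of_notMem_dyadic (ht : t ≤ T) (hn : t ∉ dyadic T n) : t < T :=
  ht.lt_of_ne fun h => hn (h ▸ right_mem_dyadic t n)

lemma gFun_mem_dyadic (ht : t ∈ Icc 0 T) : gFun T X n ω t ∈ dyadic T n := by
  by_cases hn : t ∈ dyadic T n
  · rwa [gFun_of_mem X ω hn]
  · obtain h | h := gFun_of_notMem X ω hn <;> rw [h]
    · exact (isGreatest_dyadFloor n ht.1).1.1
    · exact (isLeast_dyadCeil n (lt_right_of_notMem_dyadic ht.2 hn)).1.1

lemma le_gFun (ht : t ∈ Icc 0 T) (ha : a ∈ dyadic T n) (hat : a ≤ t) : a ≤ gFun T X n ω t := by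
  by_cases hn : t ∈ dyadic T n
  · rwa [gFun_of_mem X ω hn]
  · obtain h | h := gFun_of_notMem X ω hn <;> rw [h]
    · exact (isGreatest_dyadFloor n ht.1).2 ⟨ha, hat⟩
    · exact hat.trans (isLeast_dyadCeil n (lt_right_of_notMem_dyadic ht.2 hn)).1.2.le

lemma gFun_le (ht : t ∈ Icc 0 T) (ha : a ∈ dyadic T n) (hta : t ≤ a) : gFun T X n ω t ≤ a := by
  by_cases hn : t ∈ dyadic T n
  · rwa [gFun_of_mem X ω hn]
  · obtain h | h := gFun_of_notMem X ω hn <;> rw [h]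
    · exact (isGreatest_dyadFloor n ht.1).1.2.trans hta
    · exact (isLeast_dyadCeil n (lt_right_of_notMem_dyadic ht.2 hn)).2
        ⟨ha, hta.lt_of_ne fun hta => hn (hta ▸ ha)⟩

lemma monotoneOn_gFun (hT : 0 ≤ T) (n : ℕ) : MonotoneOn (gFun T X n ω) (dyadic T (n + 1)) := by
  intro s hs t ht hst
  obtain rfl | hst := hst.eq_or_lt
  · exact le_rfl
  · obtain ⟨a, ha, hsa, hat⟩ := exists_mem_dyadic_Icc_of_lt hT hs ht hst
    exact (gFun_le X ω (dyadic_subset_Icc hT _ hs) ha hsa).trans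
      (le_gFun X ω (dyadic_subset_Icc hT _ ht) ha hat)

lemma isRetractionTower_gFun (hT : 0 ≤ T) :
    IsRetractionTower (dyadic T) fun n => gFun T X n ω where
  monotone := monotone_dyadic T
  mapsTo n _ ht := gFun_mem_dyadic X ω (dyadic_subset_Icc hT (n + 1) ht)
  monotoneOn := monotoneOn_gFun X ω hT
  eqOn_id _ _ ht := gFun_of_mem X ω ht

lemma fComp_eq_descend (T : ℝ) (m k : ℕ) :
    fComp T X m k ω = descend (fun n => gFun T X n ω) m (k + 1) := by
  induction k with
  | zero => rfl
  | succ k ih =>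
    funext t
    rw [fComp, ih]
    rfl

lemma fmn_add_eq_descend (T : ℝ) (m k : ℕ) :
    fmn T X m (m + k) ω = descend (fun n => gFun T X n ω) m (k + 1) := by
  funext t
  rw [fmn, Nat.add_sub_cancel_left, fComp_eq_descend]

end NearestNeighbour

lemma abs_sub_towerRightLim_dyadic_le {T t : ℝ} {g : ℕ → ℝ → ℝ}
    (hg : IsRetractionTower (dyadic T) g) (n : ℕ) (ht : t ∈ Icc 0 T) :
    |t - towerRightLim (dyadic T) g T n t| ≤ T / 2 ^ n := by
  have hT : T ∈ ⋃ n, dyadic T n := mem_iUnion_of_mem 0 (right_mem_dyadic T 0)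
  have hfin := finite_dyadic T n
  obtain rfl | htT := ht.2.eq_or_lt
  · have hfix : towerRightLim (dyadic t) g t n t = t :=
      le_antisymm (hg.towerRightLim_le hT hfin (right_mem_dyadic t n) (mem_insert t _))
        (hg.le_towerRightLim hT hfin (right_mem_dyadic t n) le_rfl le_rfl)
    rw [hfix, sub_self, abs_zero]
    exact div_nonneg ht.1 (by positivity)
  · obtain ⟨a, ha, hb, hat, htb⟩ := exists_mem_dyadic_le_lt_add n ⟨ht.1, htT⟩
    have hlower := hg.le_towerRightLim hT hfin ha hat ht.2
    have hupper := hg.towerRightLim_le hT hfin hb (.inr ⟨mem_iUnion_of_mem n hb, htb⟩)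
    rw [abs_le]
    constructor <;> linarith

/-- **Lemma (dyadic approximation scheme).**
(i) `g_n(ω,·)` is non-decreasing on `S_{n+1}` and the identity on `S_n`; consequently
`f_{m,n}(ω,·)` is non-decreasing on `S_{n+1}`.
(ii) There are non-decreasing right-continuous step functions
`f_n : Ξ × [0,T] → S_n` with `f_{m,n}(ω, f_{n+1}(ω,t)) = f_m(ω,t)` for `n ≥ m` and
`|t − f_n(ω,t)| ≤ T 2^{−n}`. -/
theorem dyadic_approximation_scheme {Ξ E : Type*} [Nonempty Ξ] [MetricSpace E]
    (T : ℝ) (hT : 0 < T) (X : ℝ → Ξ → E) :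
    (∀ (ω : Ξ) (n : ℕ),
      MonotoneOn (gFun T X n ω) (dyadic T (n + 1)) ∧
      (∀ t ∈ dyadic T n, gFun T X n ω t = t) ∧
      (∀ m : ℕ, m ≤ n → MonotoneOn (fmn T X m n ω) (dyadic T (n + 1)))) ∧
    ∃ f : ℕ → Ξ → ℝ → ℝ,
      (∀ (n : ℕ) (ω : Ξ),
        (∀ t ∈ Set.Icc (0 : ℝ) T, f n ω t ∈ dyadic T n) ∧
        MonotoneOn (f n ω) (Set.Icc (0 : ℝ) T) ∧
        (∀ t ∈ Set.Ico (0 : ℝ) T,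
          Tendsto (f n ω) (nhdsWithin t (Set.Ioc t T)) (nhds (f n ω t)))) ∧
      (∀ m n : ℕ, m ≤ n → ∀ (ω : Ξ) (t : ℝ), t ∈ Set.Icc (0 : ℝ) T →
        fmn T X m n ω (f (n + 1) ω t) = f m ω t) ∧
      (∀ (n : ℕ) (ω : Ξ) (t : ℝ), t ∈ Set.Icc (0 : ℝ) T →
        |t - f n ω t| ≤ T / 2 ^ n) := by
  have hg (ω : Ξ) := isRetractionTower_gFun X ω hT.le
  have hTmem : T ∈ ⋃ n, dyadic T n := mem_iUnion_of_mem 0 (right_mem_dyadic T 0)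
  have hfin := finite_dyadic T
  refine ⟨fun ω n => ⟨(hg ω).monotoneOn n, (hg ω).eqOn_id n, fun m hmn => ?_⟩,
    fun n ω => towerRightLim (dyadic T) (fun n => gFun T X n ω) T n,
    fun n ω => ⟨fun t _ => (hg ω).towerRightLim_mem hTmem (hfin n) t,
      ((hg ω).monotone_towerRightLim hTmem (hfin n)).monotoneOn _, fun t ht => ?_⟩,
    fun m n hmn ω t _ => ?_, fun n ω t => abs_sub_towerRightLim_dyadic_le (hg ω) n⟩
  · obtain ⟨k, rfl⟩ := Nat.exists_eq_add_of_le hmn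
    rw [fmn_add_eq_descend]
    exact (hg ω).monotoneOn_descend m (k + 1)
  · exact ((hg ω).continuousWithinAt_towerRightLim hTmem (hfin n) ht.2).mono Ioc_subset_Ioi_self
  · obtain ⟨k, rfl⟩ := Nat.exists_eq_add_of_le hmn
    rw [fmn_add_eq_descend]
    exact (hg ω).descend_towerRightLim hTmem (hfin m) (hfin (m + (k + 1))) t

end
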